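/- For every λ ∈ ℂ one has λ^{n−r} · det S(λ) = (−1)^r · det P(λ). Consequently Λ(S) \ {0} = Λ(P) \ {0}. -/

import Mathlib

open Matrix ComplexOrder

/-!
The bordered matrix `[A, B; C, -z]` becomes block triangular after right multiplication by
`[z, 0; C, 1]`, which turns its corner into `z A + B C`. Comparing determinants gives the identity
up to a power of `z`. That power may be cancelled when `z` is regular; an arbitrary `z` is reached
by specializing the identity for the indeterminate `X`, which is always regular. For `A = z M + D`
the bordered matrix is the pencil, and `z A + B C` is the quadratic matrix polynomial.
-/

theorem fromBlocks_neg_smul_one_map {R S l m n : Type*} [NonAssocRing R] [NonAssocRing S]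
    [DecidableEq n] (f : R →+* S) (A : Matrix l m R) (B : Matrix l n R) (C : Matrix n m R)
    (z : R) :
    (fromBlocks A B C (-(z • 1))).map f =
      fromBlocks (A.map f) (B.map f) (C.map f) (-(f z • 1)) := by
  rw [fromBlocks_map, Matrix.map_neg f (map_neg f), Matrix.map_smul' f z _ (map_mul f),
    Matrix.map_one f (map_zero f) (map_one f)]

theorem smul_add_mul_map {R S l m n : Type*} [NonAssocSemiring R] [NonAssocSemiring S]
    [Fintype n] (f : R →+* S) (A : Matrix l m R) (B : Matrix l n R) (C : Matrix n m R) (z : R) :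
    (z • A + B * C).map f = f z • A.map f + B.map f * C.map f := by
  rw [Matrix.map_add f (map_add f), Matrix.map_smulₛₗ f f z (map_mul f z), Matrix.map_mul]

section Bordered

variable {R m n : Type*} [CommRing R] [Fintype m] [Fintype n] [DecidableEq m] [DecidableEq n]

theorem fromBlocks_neg_smul_one_mul_fromBlocks (A : Matrix m m R) (B : Matrix m n R)
    (C : Matrix n m R) (z : R) :
    fromBlocks A B C (-(z • 1)) * fromBlocks (z • 1) 0 C 1 =
      fromBlocks (z • A + B * C) B 0 (-(z • 1)) := by
  simp [fromBlocks_multiply]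

theorem det_fromBlocks_neg_smul_one_mul_pow_card (A : Matrix m m R) (B : Matrix m n R)
    (C : Matrix n m R) (z : R) :
    (fromBlocks A B C (-(z • 1))).det * z ^ Fintype.card m =
      (-1) ^ Fintype.card n * (z • A + B * C).det * z ^ Fintype.card n := by
  have det_eq := congrArg det (fromBlocks_neg_smul_one_mul_fromBlocks A B C z)
  simp only [det_mul, det_fromBlocks_zero₁₂, det_fromBlocks_zero₂₁, det_neg, det_smul, det_one,
    mul_one] at det_eq
  rw [det_eq]
  ring

theorem det_fromBlocks_neg_smul_one_eq_zero_iff (A : Matrix m m R) (B : Matrix m n R)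
    (C : Matrix n m R) {z : R} (hz : IsRegular z) :
    (fromBlocks A B C (-(z • 1))).det = 0 ↔ (z • A + B * C).det = 0 := by
  rw [← (hz.pow (Fintype.card m)).right.mul_right_eq_zero_iff,
    det_fromBlocks_neg_smul_one_mul_pow_card,
    (hz.pow (Fintype.card n)).right.mul_right_eq_zero_iff,
    (isUnit_one.neg.pow (Fintype.card n)).mul_right_eq_zero]

theorem pow_mul_det_fromBlocks_neg_smul_one_of_isRegular
    (hcard : Fintype.card n ≤ Fintype.card m) (A : Matrix m m R) (B : Matrix m n R)
    (C : Matrix n m R) {z : R} (hz : IsRegular z) :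
    z ^ (Fintype.card m - Fintype.card n) * (fromBlocks A B C (-(z • 1))).det =
      (-1) ^ Fintype.card n * (z • A + B * C).det := by
  refine (hz.pow (Fintype.card n)).right (?_ : _ * _ = _ * _)
  rw [← det_fromBlocks_neg_smul_one_mul_pow_card, ← pow_sub_mul_pow z hcard]
  ring

theorem pow_mul_det_fromBlocks_neg_smul_one (hcard : Fintype.card n ≤ Fintype.card m)
    (A : Matrix m m R) (B : Matrix m n R) (C : Matrix n m R) (z : R) :
    z ^ (Fintype.card m - Fintype.card n) * (fromBlocks A B C (-(z • 1))).det =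
      (-1) ^ Fintype.card n * (z • A + B * C).det := by
  have generic := pow_mul_det_fromBlocks_neg_smul_one_of_isRegular hcard (A.map Polynomial.C)
    (B.map Polynomial.C) (C.map Polynomial.C) Polynomial.isRegular_X
  have specialized := congrArg (Polynomial.evalRingHom z) generic
  have eval_C : ⇑(Polynomial.evalRingHom z) ∘ Polynomial.C = id := by
    ext
    simp
  have eval_X : Polynomial.evalRingHom z Polynomial.X = z := Polynomial.eval_X
  simpa only [map_mul, map_pow, map_neg, map_one, RingHom.map_det, RingHom.mapMatrix_apply,
    fromBlocks_neg_smul_one_map, smul_add_mul_map, Matrix.map_map, eval_C, eval_X,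
    Matrix.map_id] using specialized

end Bordered

theorem stmt0_general {R m n : Type*} [CommRing R] [NoZeroDivisors R] [Fintype m] [Fintype n]
    [DecidableEq m] [DecidableEq n] (hcard : Fintype.card n ≤ Fintype.card m)
    (M D : Matrix m m R) (B : Matrix m n R) (C : Matrix n m R)
    (P : R → Matrix m m R) (hP : ∀ z, P z = z ^ 2 • M + z • D + B * C)
    (S : R → Matrix (m ⊕ n) (m ⊕ n) R)
    (hS : ∀ z, S z = z • fromBlocks M 0 0 (-1) + fromBlocks D B C 0) :
    (∀ z, z ^ (Fintype.card m - Fintype.card n) * (S z).det =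
        (-1) ^ Fintype.card n * (P z).det) ∧
      {z | (S z).det = 0} \ {0} = {z | (P z).det = 0} \ {0} := by
  have pencil_eq (z : R) : S z = fromBlocks (z • M + D) B C (-(z • 1)) := by
    simp [hS, fromBlocks_smul, fromBlocks_add]
  have quadratic_eq (z : R) : P z = z • (z • M + D) + B * C := by
    rw [hP, smul_add, smul_smul, sq]
  simp only [pencil_eq, quadratic_eq]
  refine ⟨fun z ↦ pow_mul_det_fromBlocks_neg_smul_one hcard _ B C z, ?_⟩
  ext z
  exact and_congr_left fun hz ↦
    det_fromBlocks_neg_smul_one_eq_zero_iff _ B C (IsRegular.of_ne_zero hz)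

/-- For every `λ ∈ ℂ` one has `λ^(n-r) * det S(λ) = (-1)^r * det P(λ)`; consequently
`Λ(S) \ {0} = Λ(P) \ {0}`. -/
theorem stmt0 {n r : ℕ} (hn : 0 < n) (hr : 0 < r) (hrn : r ≤ n)
    (M D : Matrix (Fin n) (Fin n) ℂ) (hM : M.PosDef) (hD : D.PosSemidef)
    (G : Matrix (Fin n) (Fin r) ℂ) (hG : G.rank = r)
    (P : ℂ → Matrix (Fin n) (Fin n) ℂ)
    (hP : ∀ z : ℂ, P z = z ^ 2 • M + z • D + G * Gᴴ)
    (S : ℂ → Matrix (Fin n ⊕ Fin r) (Fin n ⊕ Fin r) ℂ)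
    (hS : ∀ z : ℂ, S z = z • Matrix.fromBlocks M 0 0 (-1) + Matrix.fromBlocks D G Gᴴ 0) :
    (∀ z : ℂ, z ^ (n - r) * (S z).det = (-1 : ℂ) ^ r * (P z).det) ∧
      {z : ℂ | (S z).det = 0} \ {0} = {z : ℂ | (P z).det = 0} \ {0} := by
  simpa only [Fintype.card_fin] using
    stmt0_general (by simpa only [Fintype.card_fin] using hrn) M D G Gᴴ P hP S hS
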